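/- Assume A has complex eigenvalues λ_1, …, λ_k, all nonzero, such that for every i = 1, …, k there is a positive integer l_i with λ_i^{l_i} a positive integer ≥ 2, and assume the support of μ is not parallel to a proper subspace of ℚ^k invariant under A. Then there exist a constant c > 0 and a function ε : ℕ → ℝ with ε(p) → 0 as p → ∞, such that for every positive integer p with gcd(det(A), p) = 1 and gcd(det(B), p) = 1, and every n ≥ c·ln p·ln ln p, one has ‖P_n − U‖ ≤ ε(p). -/

import Mathlib

open scoped BigOperators
open Matrix

noncomputable section

/-- Distribution of the un-reduced chain `X₀ = 0`, `X_{n+1} = A·X_n + B_n` on `ℤ^k`,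
where the `B_n` are i.i.d. with common distribution `μ`. -/
def chainDist {k : ℕ} (A : Matrix (Fin k) (Fin k) ℤ) (μ : (Fin k → ℤ) → ℝ) :
    ℕ → (Fin k → ℤ) → ℝ
  | 0 => fun x => if x = 0 then 1 else 0
  | n + 1 => fun x => ∑' y : Fin k → ℤ, chainDist A μ n y * μ (x - A.mulVec y)

/-- `P_n`, the distribution of `X_n = A·X_{n-1} + B_{n-1} (mod p)` on `(ℤ/pℤ)^k`. -/
def chainDistMod {k : ℕ} (A : Matrix (Fin k) (Fin k) ℤ) (μ : (Fin k → ℤ) → ℝ) (p : ℕ)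
    (n : ℕ) (x : Fin k → ZMod p) : ℝ :=
  ∑' y : {y : Fin k → ℤ // (fun i => ((y i : ZMod p))) = x}, chainDist A μ n y.val

/-- The uniform distribution `U` on `(ℤ/pℤ)^k`. -/
def unif (k p : ℕ) : ℝ := ((p : ℝ) ^ k)⁻¹

/-- The variation distance `‖P_n − U‖`. -/
def tvDist {k : ℕ} (A : Matrix (Fin k) (Fin k) ℤ) (μ : (Fin k → ℤ) → ℝ) (p : ℕ)
    (n : ℕ) : ℝ :=
  (1 / 2) * ∑' x : Fin k → ZMod p, |chainDistMod A μ p n x - unif k p|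

/-- `supp μ` is parallel to `v + W` for some proper subspace `W` of `ℚ^k` invariant under
`A`. -/
def ParallelInv {k : ℕ} (A : Matrix (Fin k) (Fin k) ℤ) (μ : (Fin k → ℤ) → ℝ) : Prop :=
  ∃ (W : Submodule ℚ (Fin k → ℚ)) (v : Fin k → ℚ), W ≠ ⊤ ∧
    (∀ w ∈ W, (A.map (Int.cast : ℤ → ℚ)).mulVec w ∈ W) ∧
    ∀ x : Fin k → ℤ, μ x ≠ 0 → (fun i => (x i : ℚ)) - v ∈ W

/-- `V = {h − k : h, k ∈ supp μ}`. -/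
def Vset {k : ℕ} (μ : (Fin k → ℤ) → ℝ) : Set (Fin k → ℤ) :=
  {x | ∃ h g : Fin k → ℤ, μ h ≠ 0 ∧ μ g ≠ 0 ∧ x = h - g}

/-- `d`, the degree of the minimal polynomial of `A` (over `ℚ`). -/
def minpolyDeg {k : ℕ} (A : Matrix (Fin k) (Fin k) ℤ) : ℕ :=
  (minpoly ℚ (A.map (Int.cast : ℤ → ℚ))).natDegree

/-- `V^{d−1} = {A^m x : x ∈ V, m = 0, …, d−1}`. -/
def VdSet {k : ℕ} (A : Matrix (Fin k) (Fin k) ℤ) (μ : (Fin k → ℤ) → ℝ) :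
    Set (Fin k → ℤ) :=
  {y | ∃ x ∈ Vset μ, ∃ m : ℕ, m < minpolyDeg A ∧ y = (A ^ m).mulVec x}

/-- The matrix `B = (y_1 … y_k)` with columns `y_1, …, y_k`. -/
def colMat {k : ℕ} (y : Fin k → (Fin k → ℤ)) : Matrix (Fin k) (Fin k) ℤ :=
  Matrix.of fun i j => y j i


def redM {k : ℕ} (p : ℕ) (x : Fin k → ℤ) : Fin k → ZMod p := fun i => (x i : ZMod p)

def muHat {k : ℕ} (p : ℕ) [NeZero p] (g : (Fin k → ℤ) → ℝ) (a : Fin k → ZMod p) : ℂ :=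
  ∑' x : Fin k → ℤ, (g x : ℂ) * ZMod.stdAddChar (a ⬝ᵥ redM p x)

lemma hasSum_cg {ι : Type*} {f g : ι → ℂ} {s : ℂ} (h : HasSum f s) (e : ∀ i, g i = f i) :
    HasSum g s := by
  have : g = f := funext e
  rw [this]; exact h

lemma conv_hasSum {k : ℕ} (A : Matrix (Fin k) (Fin k) ℤ) (P μ : (Fin k → ℤ) → ℝ)
    (hP : ∀ x, 0 ≤ P x) (hμ : ∀ x, 0 ≤ μ x) (sP : Summable P) (sμ : Summable μ)
    (E : (Fin k → ℤ) → ℂ) (s : ℂ)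
    (h : HasSum (fun q : (Fin k → ℤ) × (Fin k → ℤ) =>
      (P q.1 : ℂ) * μ q.2 * E (q.2 + A.mulVec q.1)) s) :
    HasSum (fun x => ((∑' y, P y * μ (x - A.mulVec y) : ℝ) : ℂ) * E x) s := by
  let e : (Fin k → ℤ) × (Fin k → ℤ) ≃ (Fin k → ℤ) × (Fin k → ℤ) :=
    { toFun := fun q => (q.2, q.1 - A.mulVec q.2)
      invFun := fun q => (q.2 + A.mulVec q.1, q.1)
      left_inv := fun q => by simp
      right_inv := fun q => by simp }
  have h1 := (e.hasSum_iff).2 h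
  have hs : Summable (fun q : (Fin k → ℤ) × (Fin k → ℤ) => P q.1 * μ q.2) :=
    sP.mul_of_nonneg sμ hP hμ
  have hs1 := (e.summable_iff).2 hs
  refine h1.prod_fiberwise (fun x => ?_)
  have h2 := hs1.prod_factor x
  have h3 := (Complex.hasSum_ofReal.2 h2.hasSum).mul_right (E x)
  simpa [e, Function.comp_def] using h3

lemma chain_prob {k : ℕ} (A : Matrix (Fin k) (Fin k) ℤ) (μ : (Fin k → ℤ) → ℝ)
    (hμ0 : ∀ x, 0 ≤ μ x) (hμ1 : HasSum μ 1) (n : ℕ) :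
    (∀ x, 0 ≤ chainDist A μ n x) ∧ HasSum (chainDist A μ n) 1 := by
  induction n with
  | zero =>
    refine ⟨fun x => ?_, ?_⟩
    · unfold chainDist; split_ifs <;> norm_num
    · have := hasSum_ite_eq (0 : Fin k → ℤ) (1 : ℝ)
      simpa [chainDist] using this
  | succ n ih =>
    refine ⟨fun x => ?_, ?_⟩
    · unfold chainDist
      exact tsum_nonneg (fun y => mul_nonneg (ih.1 y) (hμ0 _))
    · have hs := ih.2.summable.mul_of_nonneg hμ1.summable ih.1 hμ0
      have h1 := ih.2.mul hμ1 hs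
      have h2 := Complex.hasSum_ofReal.2 h1
      have h3 := conv_hasSum A (chainDist A μ n) μ ih.1 hμ0 ih.2.summable hμ1.summable
        (fun _ => 1) 1 (by simpa using h2)
      rw [← Complex.hasSum_ofReal]
      simpa [chainDist] using h3

lemma norm_std {p : ℕ} [NeZero p] (z : ZMod p) : ‖(ZMod.stdAddChar z : ℂ)‖ = 1 :=
  AddChar.norm_apply _ _

lemma summ_char {k p : ℕ} [NeZero p] (g : (Fin k → ℤ) → ℝ) (hg : ∀ x, 0 ≤ g x)
    (sg : Summable g) (a : Fin k → ZMod p) :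
    Summable (fun x => (g x : ℂ) * ZMod.stdAddChar (a ⬝ᵥ redM p x)) := by
  refine Summable.of_norm ?_
  simpa [norm_std, abs_of_nonneg (hg _)] using sg

lemma redM_add {k : ℕ} (p : ℕ) (x y : Fin k → ℤ) : redM p (x + y) = redM p x + redM p y := by
  ext i; simp [redM]

lemma redM_mulVec {k : ℕ} (p : ℕ) (A : Matrix (Fin k) (Fin k) ℤ) (x : Fin k → ℤ) :
    redM p (A.mulVec x) = (A.map (Int.cast : ℤ → ZMod p)).mulVec (redM p x) := by
  ext i; simp [redM, Matrix.mulVec, dotProduct]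

lemma muHat_succ {k p : ℕ} [NeZero p] (A : Matrix (Fin k) (Fin k) ℤ) (μ : (Fin k → ℤ) → ℝ)
    (hμ0 : ∀ x, 0 ≤ μ x) (hμ1 : HasSum μ 1) (n : ℕ) (a : Fin k → ZMod p) :
    muHat p (chainDist A μ (n+1)) a =
      muHat p (chainDist A μ n) ((A.map (Int.cast : ℤ → ZMod p))ᵀ.mulVec a) * muHat p μ a := by
  obtain ⟨h0, h1⟩ := chain_prob A μ hμ0 hμ1 n
  set a' := (A.map (Int.cast : ℤ → ZMod p))ᵀ.mulVec a with ha'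
  have s1 := summ_char (p := p) _ h0 h1.summable a'
  have s2 := summ_char (p := p) μ hμ0 hμ1.summable a
  have s3 := s1.hasSum.mul s2.hasSum (by
    refine Summable.of_norm ?_
    have hs := h1.summable.mul_of_nonneg hμ1.summable h0 hμ0
    simpa [norm_std, abs_of_nonneg (hμ0 _), abs_of_nonneg (h0 _)] using hs)
  have h3 := conv_hasSum A (chainDist A μ n) μ h0 hμ0 h1.summable hμ1.summable
        (fun x => ZMod.stdAddChar (a ⬝ᵥ redM p x)) _ (by
    refine hasSum_cg s3 (fun q => ?_)
    rw [redM_add, redM_mulVec, dotProduct_add, AddChar.map_add_eq_mul, ha',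
      Matrix.mulVec_transpose, ← Matrix.dotProduct_mulVec]
    ring)
  exact h3.tsum_eq

lemma muHat_chain {k p : ℕ} [NeZero p] (A : Matrix (Fin k) (Fin k) ℤ) (μ : (Fin k → ℤ) → ℝ)
    (hμ0 : ∀ x, 0 ≤ μ x) (hμ1 : HasSum μ 1) (n : ℕ) (a : Fin k → ZMod p) :
    muHat p (chainDist A μ n) a =
      ∏ j ∈ Finset.range n, muHat p μ (((A.map (Int.cast : ℤ → ZMod p))ᵀ ^ j).mulVec a) := by
  induction n generalizing a with
  | zero =>
    have := tsum_ite_eq (0 : Fin k → ℤ) (fun _ => (1 : ℂ))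
    simp only [muHat, chainDist, Finset.range_zero, Finset.prod_empty]
    rw [← this]
    congr 1; ext x
    split_ifs with h
    · subst h
      have : redM p (0 : Fin k → ℤ) = 0 := by ext i; simp [redM]
      simp [this]
    · simp
  | succ n ih =>
    rw [muHat_succ A μ hμ0 hμ1, ih, Finset.prod_range_succ']
    simp only [Matrix.mulVec_mulVec, ← pow_succ, pow_zero, Matrix.one_mulVec]

lemma chainMod_hat {k p : ℕ} [NeZero p] (A : Matrix (Fin k) (Fin k) ℤ) (μ : (Fin k → ℤ) → ℝ)
    (hμ0 : ∀ x, 0 ≤ μ x) (hμ1 : HasSum μ 1) (n : ℕ) (a : Fin k → ZMod p) :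
    ∑ x, (chainDistMod A μ p n x : ℂ) * ZMod.stdAddChar (a ⬝ᵥ x) =
      muHat p (chainDist A μ n) a := by
  obtain ⟨h0, h1⟩ := chain_prob A μ hμ0 hμ1 n
  have s1 := (summ_char (p := p) _ h0 h1.summable a).hasSum
  have s2 := ((Equiv.sigmaFiberEquiv (redM (k := k) p)).hasSum_iff).2 s1
  have s3 := s2.sigma (g := fun x => (chainDistMod A μ p n x : ℂ) * ZMod.stdAddChar (a ⬝ᵥ x))
    (fun x => by
      have hs : Summable (fun y : {y : Fin k → ℤ // redM p y = x} => chainDist A μ n y.val) :=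
        h1.summable.subtype _
      have h3 := (Complex.hasSum_ofReal.2 hs.hasSum).mul_right (ZMod.stdAddChar (a ⬝ᵥ x))
      refine hasSum_cg h3 (fun y => ?_)
      obtain ⟨y, rfl⟩ := y
      rfl)
  exact (hasSum_fintype _).unique s3

lemma muHat_zero {k p : ℕ} [NeZero p] (g : (Fin k → ℤ) → ℝ) (hg : HasSum g 1) :
    muHat p g 0 = 1 := by
  have := (Complex.hasSum_ofReal.2 hg).tsum_eq
  simpa [muHat] using this

lemma chainMod_nonneg {k p : ℕ} (A : Matrix (Fin k) (Fin k) ℤ) (μ : (Fin k → ℤ) → ℝ)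
    (hμ0 : ∀ x, 0 ≤ μ x) (hμ1 : HasSum μ 1) (n : ℕ) (x : Fin k → ZMod p) :
    0 ≤ chainDistMod A μ p n x := tsum_nonneg (fun _ => (chain_prob A μ hμ0 hμ1 n).1 _)

lemma chainMod_sum {k p : ℕ} [NeZero p] (A : Matrix (Fin k) (Fin k) ℤ) (μ : (Fin k → ℤ) → ℝ)
    (hμ0 : ∀ x, 0 ≤ μ x) (hμ1 : HasSum μ 1) (n : ℕ) :
    ∑ x, chainDistMod A μ p n x = 1 := by
  have h := chainMod_hat (p := p) A μ hμ0 hμ1 n 0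
  rw [muHat_zero _ (chain_prob A μ hμ0 hμ1 n).2] at h
  simp at h
  exact_mod_cast h

lemma char_orth {k p : ℕ} [NeZero p] (x : Fin k → ZMod p) :
    ∑ a : Fin k → ZMod p, (ZMod.stdAddChar (a ⬝ᵥ x) : ℂ) = if x = 0 then (p : ℂ) ^ k else 0 := by
  split_ifs with h
  · subst h; simp
  · let ψ : AddChar (Fin k → ZMod p) ℂ :=
      { toFun := fun a => ZMod.stdAddChar (a ⬝ᵥ x)
        map_zero_eq_one' := by simp
        map_add_eq_mul' := fun a b => by simp [add_dotProduct, AddChar.map_add_eq_mul] }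
    have hψ : ψ ≠ 1 := by
      intro h1
      apply h
      ext i
      by_contra hi
      have hp := ZMod.isPrimitive_stdAddChar p hi
      apply hp
      ext b
      have h2 := DFunLike.congr_fun h1 (Pi.single i b)
      simp only [ψ, AddChar.coe_mk, single_dotProduct, AddChar.one_apply] at h2
      simpa [AddChar.mulShift_apply, mul_comm] using h2
    exact AddChar.sum_eq_zero_of_ne_one hψ

lemma parseval {k p : ℕ} [NeZero p] (g : (Fin k → ZMod p) → ℝ) :
    ∑ a : Fin k → ZMod p, ‖∑ x, (g x : ℂ) * ZMod.stdAddChar (a ⬝ᵥ x)‖ ^ 2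
      = (p : ℝ) ^ k * ∑ x, g x ^ 2 := by
  have key : ∀ a : Fin k → ZMod p, ((‖∑ x, (g x : ℂ) * ZMod.stdAddChar (a ⬝ᵥ x)‖ ^ 2 : ℝ) : ℂ)
      = ∑ x, ∑ y, (g x : ℂ) * g y * ZMod.stdAddChar (a ⬝ᵥ (x - y)) := by
    intro a
    rw [Complex.ofReal_pow, ← Complex.mul_conj', map_sum, Finset.sum_mul_sum]
    refine Finset.sum_congr rfl fun x _ => Finset.sum_congr rfl fun y _ => ?_
    rw [map_mul, Complex.conj_ofReal, ← AddChar.map_neg_eq_conj, dotProduct_sub, sub_eq_add_neg,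
      AddChar.map_add_eq_mul]
    ring
  have : ((∑ a : Fin k → ZMod p, ‖∑ x, (g x : ℂ) * ZMod.stdAddChar (a ⬝ᵥ x)‖ ^ 2 : ℝ) : ℂ)
      = (((p : ℝ) ^ k * ∑ x, g x ^ 2 : ℝ) : ℂ) := by
    rw [Complex.ofReal_sum]
    simp only [key]
    rw [Finset.sum_comm]
    have : ∀ x y : Fin k → ZMod p, ∑ a : Fin k → ZMod p,
        (g x : ℂ) * g y * ZMod.stdAddChar (a ⬝ᵥ (x - y)) =
        if x = y then (g x : ℂ) * g y * (p : ℂ) ^ k else 0 := by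
      intro x y
      rw [← Finset.mul_sum, char_orth]
      simp [sub_eq_zero]
    have h2 : ∀ x : Fin k → ZMod p, ∑ a : Fin k → ZMod p, ∑ y : Fin k → ZMod p,
        (g x : ℂ) * g y * ZMod.stdAddChar (a ⬝ᵥ (x - y)) = (g x : ℂ) * g x * (p : ℂ) ^ k := by
      intro x
      rw [Finset.sum_comm]
      simp only [this, Finset.sum_ite_eq, Finset.mem_univ, if_true]
    rw [Finset.sum_congr rfl (fun x _ => h2 x)]
    push_cast
    rw [Finset.mul_sum]
    exact Finset.sum_congr rfl fun x _ => by ring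
  exact_mod_cast this

lemma upper_bound {k p : ℕ} [NeZero p] (A : Matrix (Fin k) (Fin k) ℤ) (μ : (Fin k → ℤ) → ℝ)
    (hμ0 : ∀ x, 0 ≤ μ x) (hμ1 : HasSum μ 1) (n : ℕ) :
    (tvDist A μ p n) ^ 2 ≤ ∑ a ∈ (Finset.univ.erase (0 : Fin k → ZMod p)),
      ‖muHat p (chainDist A μ n) a‖ ^ 2 := by
  have hp : (0 : ℝ) < (p : ℝ) ^ k := by
    have := NeZero.pos p
    positivity
  have h1 := parseval (p := p) (chainDistMod A μ p n)
  simp only [chainMod_hat A μ hμ0 hμ1] at h1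
  rw [← Finset.add_sum_erase _ _ (Finset.mem_univ (0 : Fin k → ZMod p)),
    muHat_zero _ (chain_prob A μ hμ0 hμ1 n).2] at h1
  have h2 : ∑ x, (chainDistMod A μ p n x - unif k p) ^ 2 =
      ∑ x, (chainDistMod A μ p n x) ^ 2 - unif k p := by
    have : ∀ x, (chainDistMod A μ p n x - unif k p) ^ 2 = (chainDistMod A μ p n x) ^ 2
       - 2 * unif k p * chainDistMod A μ p n x + unif k p ^ 2 := fun x => by ring
    simp only [this, Finset.sum_add_distrib, Finset.sum_sub_distrib, ← Finset.mul_sum,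
      chainMod_sum A μ hμ0 hμ1]
    simp [unif]
    field_simp
    ring
  have h3 : (∑ x, |chainDistMod A μ p n x - unif k p|) ^ 2 ≤
      (p : ℝ) ^ k * ∑ x, (chainDistMod A μ p n x - unif k p) ^ 2 := by
    have := sq_sum_le_card_mul_sum_sq (s := (Finset.univ : Finset (Fin k → ZMod p)))
      (f := fun x => |chainDistMod A μ p n x - unif k p|)
    simpa using this
  rw [h2, mul_sub] at h3
  have h4 : (p : ℝ) ^ k * unif k p = 1 := by simp [unif, hp.ne']
  unfold tvDist
  rw [tsum_fintype]
  have h5 := sq_nonneg (∑ x, |chainDistMod A μ p n x - unif k p|)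
  rw [norm_one, one_pow] at h1
  nlinarith

lemma tv_le_one {k p : ℕ} [NeZero p] (A : Matrix (Fin k) (Fin k) ℤ) (μ : (Fin k → ℤ) → ℝ)
    (hμ0 : ∀ x, 0 ≤ μ x) (hμ1 : HasSum μ 1) (n : ℕ) : tvDist A μ p n ≤ 1 := by
  have hp : (0 : ℝ) < (p : ℝ) ^ k := by
    have := NeZero.pos p
    positivity
  have hu : 0 ≤ unif k p := by unfold unif; positivity
  unfold tvDist
  rw [tsum_fintype]
  have : ∑ x, |chainDistMod A μ p n x - unif k p| ≤
      ∑ x : Fin k → ZMod p, (chainDistMod A μ p n x + unif k p) := by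
    refine Finset.sum_le_sum fun x _ => ?_
    have := chainMod_nonneg A μ hμ0 hμ1 n x
    rw [abs_le]; constructor <;> linarith
  rw [Finset.sum_add_distrib, chainMod_sum A μ hμ0 hμ1] at this
  have h4 : ∑ x : Fin k → ZMod p, unif k p = 1 := by simp [unif, hp.ne']
  linarith

lemma re_std {p : ℕ} [NeZero p] (z : ZMod p) :
    (ZMod.stdAddChar z : ℂ).re = Real.cos (2 * Real.pi * z.valMinAbs / p) := by
  conv_lhs => rw [← ZMod.coe_valMinAbs z, ZMod.stdAddChar_coe]
  rw [show (2 * (Real.pi : ℂ) * Complex.I * (z.valMinAbs : ℂ) / (p : ℂ)) =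
    ((2 * Real.pi * z.valMinAbs / p : ℝ) : ℂ) * Complex.I by push_cast; ring]
  exact Complex.exp_ofReal_mul_I_re _

lemma one_sub_re_std {p : ℕ} [NeZero p] (z : ZMod p) :
    8 * ((z.valMinAbs : ℝ) / p) ^ 2 ≤ 1 - (ZMod.stdAddChar z : ℂ).re := by
  rw [re_std]
  have hp : (0 : ℝ) < p := by exact_mod_cast NeZero.pos p
  have hv : |(z.valMinAbs : ℝ)| * 2 ≤ p := by
    have := ZMod.valMinAbs_mem_Ioc z
    have h1 : (-(p : ℝ)) < z.valMinAbs * 2 := by exact_mod_cast this.1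
    have h2 : (z.valMinAbs : ℝ) * 2 ≤ p := by exact_mod_cast this.2
    have : |(z.valMinAbs : ℝ)| ≤ p / 2 := by rw [abs_le]; constructor <;> linarith
    linarith
  have hpi := Real.pi_pos
  have h := Real.cos_le_one_sub_mul_cos_sq (x := 2 * Real.pi * z.valMinAbs / p) (by
    rw [abs_div, abs_mul, abs_mul, abs_of_pos hp, abs_of_pos hpi, div_le_iff₀ hp]
    rw [abs_of_pos (by norm_num : (0 : ℝ) < 2)]
    nlinarith)
  have e : 2 / Real.pi ^ 2 * (2 * Real.pi * z.valMinAbs / p) ^ 2 =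
      8 * ((z.valMinAbs : ℝ) / p) ^ 2 := by
    field_simp; ring
  linarith

lemma muHat_sq {k p : ℕ} [NeZero p] (μ : (Fin k → ℤ) → ℝ)
    (hμ0 : ∀ x, 0 ≤ μ x) (hμ1 : HasSum μ 1) (a : Fin k → ZMod p) (h g : Fin k → ℤ) :
    ‖muHat p μ a‖ ^ 2 ≤
      1 - μ h * μ g * (8 * (((a ⬝ᵥ redM p (h - g)).valMinAbs : ℝ) / p) ^ 2) := by
  have s := (summ_char (p := p) μ hμ0 hμ1.summable a).hasSum
  have s' := (Complex.hasSum_conj' (f := _) (x := _)).2 s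
  have sp := hμ1.summable.mul_of_nonneg hμ1.summable hμ0 hμ0
  have s2 := s.mul s' (by
    refine Summable.of_norm ?_
    simpa [norm_std, abs_of_nonneg (hμ0 _)] using sp)
  have s3 := Complex.hasSum_re s2
  have s4 := (hμ1.mul hμ1 sp).sub s3
  have hre : ((muHat p μ a) * (starRingEnd ℂ) (muHat p μ a)).re = ‖muHat p μ a‖ ^ 2 := by
    rw [Complex.mul_conj']; norm_cast
  have hterm : ∀ q : (Fin k → ℤ) × (Fin k → ℤ),
      μ q.1 * μ q.2 - ((μ q.1 : ℂ) * ZMod.stdAddChar (a ⬝ᵥ redM p q.1) *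
        (starRingEnd ℂ) ((μ q.2 : ℂ) * ZMod.stdAddChar (a ⬝ᵥ redM p q.2))).re =
      μ q.1 * μ q.2 * (1 - (ZMod.stdAddChar (a ⬝ᵥ redM p (q.1 - q.2)) : ℂ).re) := by
    intro q
    have e1 : redM p (q.1 - q.2) = redM p q.1 - redM p q.2 := by ext i; simp [redM]
    rw [e1, dotProduct_sub, sub_eq_add_neg (a ⬝ᵥ _), AddChar.map_add_eq_mul,
      AddChar.map_neg_eq_conj, map_mul, Complex.conj_ofReal]
    rw [show (μ q.1 : ℂ) * ZMod.stdAddChar (a ⬝ᵥ redM p q.1) * ((μ q.2 : ℂ) *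
       (starRingEnd ℂ) (ZMod.stdAddChar (a ⬝ᵥ redM p q.2))) = ((μ q.1 * μ q.2 : ℝ) : ℂ) *
        (ZMod.stdAddChar (a ⬝ᵥ redM p q.1) *
       (starRingEnd ℂ) (ZMod.stdAddChar (a ⬝ᵥ redM p q.2))) by push_cast; ring]
    rw [Complex.re_ofReal_mul]; ring
  have s5 := le_hasSum s4 (h, g) (fun q _ => by
    rw [hterm q]
    refine mul_nonneg (mul_nonneg (hμ0 _) (hμ0 _)) ?_
    have := Complex.re_le_norm (ZMod.stdAddChar (a ⬝ᵥ redM p (q.1 - q.2)) : ℂ)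
    rw [norm_std] at this
    linarith)
  rw [hterm (h, g)] at s5
  have s6 := mul_le_mul_of_nonneg_left (one_sub_re_std (a ⬝ᵥ redM p (h - g)))
    (mul_nonneg (hμ0 h) (hμ0 g))
  have s7 : μ h * μ g * (1 - (ZMod.stdAddChar (a ⬝ᵥ redM p (h - g)) : ℂ).re) ≤
     1 * 1 - ‖muHat p μ a‖ ^ 2 := by
    rw [← hre]; exact s5
  linarith

lemma muHat_sq_le_one {k p : ℕ} [NeZero p] (μ : (Fin k → ℤ) → ℝ)
    (hμ0 : ∀ x, 0 ≤ μ x) (hμ1 : HasSum μ 1) (a : Fin k → ZMod p) :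
    ‖muHat p μ a‖ ^ 2 ≤ 1 := by
  refine (muHat_sq μ hμ0 hμ1 a 0 0).trans ?_
  have := mul_nonneg (hμ0 0) (hμ0 0)
  have h2 : 0 ≤ μ 0 * μ 0 * (8 * (((a ⬝ᵥ redM p (0 - 0)).valMinAbs : ℝ) / p) ^ 2) := by positivity
  linarith

lemma prod_le_mean {r : ℕ} (hr : 0 < r) (g : ℕ → ℝ) (hg : ∀ i, 0 ≤ g i) :
    ∏ b ∈ Finset.range r, g b ≤ ∑ b ∈ Finset.range r, (1 / (r : ℝ)) * g b ^ r := by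
  have hr' : (r : ℝ) ≠ 0 := by positivity
  have := Real.geom_mean_le_arith_mean_weighted (Finset.range r) (fun _ => 1 / (r : ℝ))
    (fun b => g b ^ r) (fun _ _ => by positivity) (by simp [hr']) (fun b _ => pow_nonneg (hg b) _)
  refine le_trans (le_of_eq ?_) this
  refine Finset.prod_congr rfl fun b _ => ?_
  rw [one_div, Real.pow_rpow_inv_natCast (hg b) hr.ne']

lemma core {G S : Type*} [Fintype G] [DecidableEq G] [DecidableEq S] (z : G)
    (Sf : Finset S) (s0 : S) (hs0 : s0 ∈ Sf) (T : G ≃ G) (hT : T z = z) (f : G → ℝ)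
    (hf0 : ∀ x, 0 ≤ f x) (hf1 : ∀ x, f x ≤ 1) (dig : G → S) (hdS : ∀ x, dig x ∈ Sf)
    (hdz : dig z = s0) (β : ℝ) (hβ0 : 0 ≤ β)
    (hβ : ∀ x, dig x ≠ s0 → f x ≤ β) (t r : ℕ) (hr : 0 < r)
    (hinj : ∀ x x' : G, (∀ j < t, dig (T^[j] x) = dig (T^[j] x')) → x = x') :
    ∑ x ∈ Finset.univ.erase z, ∏ j ∈ Finset.range (r * t), f (T^[j] x)
      ≤ (1 + Sf.card * β ^ r) ^ t - 1 := by
  classical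
  set g : G → ℝ := fun x => ∏ j ∈ Finset.range t, f (T^[j] x) with hg
  have hg0 : ∀ x, 0 ≤ g x := fun x => Finset.prod_nonneg fun j _ => hf0 _
  have hTz : ∀ j, T^[j] z = z := fun j => Function.iterate_fixed hT j
  have h1 : ∀ (r : ℕ) x, ∏ j ∈ Finset.range (r * t), f (T^[j] x) =
      ∏ b ∈ Finset.range r, g (T^[b * t] x) := by
    intro r x
    induction r with
    | zero => simp
    | succ r ih =>
      rw [Nat.succ_mul, Finset.prod_range_add, ih, Finset.prod_range_succ]
      congr 1
      refine Finset.prod_congr rfl fun j _ => ?_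
      rw [← Function.iterate_add_apply, add_comm]
  have hbij : ∀ j, ∑ x ∈ Finset.univ.erase z, g (T^[j] x) ^ r =
      ∑ x ∈ Finset.univ.erase z, g x ^ r := by
    intro j
    have hj := T.bijective.iterate j
    refine Finset.sum_bij (fun x _ => T^[j] x) ?_ ?_ ?_ ?_
    · intro x hx
      simp only [Finset.mem_erase, Finset.mem_univ, and_true] at hx ⊢
      intro h; apply hx; apply hj.1; rw [h, hTz]
    · intro x _ y _ h; exact hj.1 h
    · intro y hy
      obtain ⟨x, rfl⟩ := hj.2 y
      refine ⟨x, ?_, rfl⟩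
      simp only [Finset.mem_erase, Finset.mem_univ, and_true] at hy ⊢
      rintro rfl; exact hy (hTz j)
    · intros; rfl
  have h2 : ∑ x ∈ Finset.univ.erase z, ∏ j ∈ Finset.range (r * t), f (T^[j] x) ≤
      ∑ x ∈ Finset.univ.erase z, g x ^ r := by
    calc _ ≤ ∑ x ∈ Finset.univ.erase z, ∑ b ∈ Finset.range r,
          (1 / (r : ℝ)) * g (T^[b * t] x) ^ r := by
          refine Finset.sum_le_sum fun x _ => ?_
          rw [h1]
          exact prod_le_mean hr (fun b => g (T^[b * t] x)) (fun _ => hg0 _)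
      _ = ∑ b ∈ Finset.range r, (1 / (r : ℝ)) * ∑ x ∈ Finset.univ.erase z, g x ^ r := by
          rw [Finset.sum_comm]
          refine Finset.sum_congr rfl fun b _ => ?_
          rw [← Finset.mul_sum, hbij]
      _ = _ := by
          have hr' : (r : ℝ) ≠ 0 := by positivity
          rw [Finset.sum_const, Finset.card_range, nsmul_eq_mul]; field_simp
  refine h2.trans ?_
  set φ : S → ℝ := fun s => if s = s0 then 1 else β ^ r with hφ
  have hφ0 : ∀ s, 0 ≤ φ s := fun s => by simp only [hφ]; split_ifs <;> positivity
  set code : G → (Fin t → S) := fun x j => dig (T^[j] x) with hcode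
  have h3 : ∀ x, g x ^ r ≤ ∏ j, φ (code x j) := by
    intro x
    rw [hg]
    simp only
    rw [← Finset.prod_pow, Finset.prod_range]
    refine Finset.prod_le_prod (fun j _ => pow_nonneg (hf0 _) _) fun j _ => ?_
    simp only [hφ, hcode]
    split_ifs with h
    · exact pow_le_one₀ (hf0 _) (hf1 _)
    · exact pow_le_pow_left₀ (hf0 _) (hβ _ h) _
  have hci : Function.Injective code := by
    intro x x' h
    exact hinj x x' fun j hj => congr_fun h ⟨j, hj⟩
  have h4 : ∑ x ∈ Finset.univ.erase z, ∏ j, φ (code x j) ≤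
      ∑ c ∈ (Fintype.piFinset fun _ : Fin t => Sf).erase (fun _ => s0), ∏ j, φ (c j) := by
    rw [← Finset.sum_image (f := fun c : Fin t → S => ∏ j, φ (c j)) (g := code)
      (s := Finset.univ.erase z) (fun x _ y _ h => hci h)]
    refine Finset.sum_le_sum_of_subset_of_nonneg ?_
      fun c _ _ => Finset.prod_nonneg fun j _ => hφ0 _
    intro c hc
    obtain ⟨x, hx, rfl⟩ := Finset.mem_image.1 hc
    refine Finset.mem_erase.2 ⟨?_, Fintype.mem_piFinset.2 fun j => hdS _⟩
    intro h
    refine (Finset.mem_erase.1 hx).1 (hci ?_)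
    rw [h]; ext j; simp [hcode, hTz, hdz]
  have h5 : ∑ c ∈ (Fintype.piFinset fun _ : Fin t => Sf), ∏ j, φ (c j) = (∑ s ∈ Sf, φ s) ^ t := by
    rw [← Finset.prod_univ_sum]; simp
  have h6 : ∑ s ∈ Sf, φ s ≤ 1 + Sf.card * β ^ r := by
    rw [← Finset.add_sum_erase _ _ hs0]
    have e : φ s0 = 1 := by simp [hφ]
    rw [e]
    have : ∑ s ∈ Sf.erase s0, φ s ≤ ∑ s ∈ Sf, β ^ r := by
      calc _ = ∑ s ∈ Sf.erase s0, β ^ r := Finset.sum_congr rfl fun s hs => by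
              simp [hφ, (Finset.mem_erase.1 hs).1]
        _ ≤ _ := Finset.sum_le_sum_of_subset_of_nonneg (Finset.erase_subset _ _)
              fun _ _ _ => by positivity
    simp only [Finset.sum_const, nsmul_eq_mul] at this
    linarith
  have h7 : (fun _ => s0 : Fin t → S) ∈ (Fintype.piFinset fun _ : Fin t => Sf) :=
    Fintype.mem_piFinset.2 fun _ => hs0
  have h8 := Finset.add_sum_erase _ (fun c : Fin t → S => ∏ j, φ (c j)) h7
  have h9 : ∏ j : Fin t, φ s0 = 1 := by simp [hφ]
  simp only [h9] at h8
  have h10 : (∑ s ∈ Sf, φ s) ^ t ≤ (1 + Sf.card * β ^ r) ^ t :=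
    pow_le_pow_left₀ (Finset.sum_nonneg fun s _ => hφ0 s) h6 t
  calc _ ≤ ∑ x ∈ Finset.univ.erase z, ∏ j, φ (code x j) := Finset.sum_le_sum fun x _ => h3 x
    _ ≤ _ := h4
    _ ≤ _ := by linarith

lemma pow_small {R : Type*} [NormedRing R] [NormedAlgebra ℂ R] [CompleteSpace R] [Nontrivial R]
    (a : R) (h : ∀ z ∈ spectrum ℂ a, ‖z‖ < 1) : ∀ᶠ n : ℕ in Filter.atTop, ‖a ^ n‖ ≤ 1 / 2 := by
  have h1 : spectralRadius ℂ a < (1 : NNReal) :=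
    spectrum.spectralRadius_lt_of_forall_lt a (fun z hz => by
      have := h z hz
      exact_mod_cast this)
  obtain ⟨r, hr1, hr2⟩ := ENNReal.lt_iff_exists_nnreal_btwn.1 h1
  have hr2' : (r : ℝ) < 1 := by exact_mod_cast hr2
  have h2 := (spectrum.pow_nnnorm_pow_one_div_tendsto_nhds_spectralRadius a).eventually_lt_const hr1
  have h3 : ∀ᶠ n : ℕ in Filter.atTop, (r : ℝ) ^ n < 1 / 2 :=
    (tendsto_pow_atTop_nhds_zero_of_lt_one r.2 hr2').eventually_lt_const (by norm_num)
  filter_upwards [h2, h3, Filter.eventually_gt_atTop 0] with n hn hn3 hn0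
  have hn0' : (0 : ℝ) < n := by exact_mod_cast hn0
  have h4 := ENNReal.rpow_le_rpow hn.le hn0'.le
  rw [← ENNReal.rpow_mul, one_div_mul_cancel hn0'.ne', ENNReal.rpow_one, ENNReal.rpow_natCast] at h4
  have h5 : ‖a ^ n‖₊ ≤ r ^ n := by exact_mod_cast h4
  have h6 : ‖a ^ n‖ ≤ (r : ℝ) ^ n := by exact_mod_cast h5
  linarith

lemma norm_castC {k : ℕ} (u : Fin k → ℤ) : ‖(fun i => (u i : ℂ))‖ = ‖u‖ := by
  simp only [Pi.norm_def]
  congr 1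
  refine Finset.sup_congr rfl fun i _ => ?_
  ext
  simp [Int.norm_eq_abs]

lemma expand {k : ℕ} (hk : 1 ≤ k)
    (A : Matrix (Fin k) (Fin k) ℤ)
    (hEig : ∀ lam : ℂ, (A.map (Int.cast : ℤ → ℂ)).charpoly.IsRoot lam →
      lam ≠ 0 ∧ ∃ l : ℕ, 0 < l ∧ ∃ m : ℕ, 2 ≤ m ∧ lam ^ l = (m : ℂ)) :
    ∀ᶠ N : ℕ in Filter.atTop, ∀ u : Fin k → ℤ, 2 * ‖u‖ ≤ ‖(Aᵀ ^ N).mulVec u‖ := by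
  let _ : NormedRing (Matrix (Fin k) (Fin k) ℂ) := Matrix.linftyOpNormedRing
  let _ : NormedAlgebra ℂ (Matrix (Fin k) (Fin k) ℂ) := Matrix.linftyOpNormedAlgebra
  have : Nonempty (Fin k) := ⟨⟨0, hk⟩⟩
  have : CompleteSpace (Matrix (Fin k) (Fin k) ℂ) := FiniteDimensional.complete ℂ _
  set Mc : Matrix (Fin k) (Fin k) ℂ := (A.map (Int.cast : ℤ → ℂ))ᵀ with hMc
  have hsp : ∀ z ∈ spectrum ℂ Mc, z ≠ 0 ∧ 1 < ‖z‖ := by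
    intro z hz
    rw [Matrix.mem_spectrum_iff_isRoot_charpoly, hMc, Matrix.charpoly_transpose] at hz
    obtain ⟨h0, l, hl, m, hm, e⟩ := hEig z hz
    refine ⟨h0, ?_⟩
    by_contra hcon
    push Not at hcon
    have h1 : ‖z‖ ^ l ≤ 1 := pow_le_one₀ (norm_nonneg _) hcon
    rw [← norm_pow, e, Complex.norm_natCast] at h1
    have : m ≤ 1 := by exact_mod_cast h1
    omega
  have hu : IsUnit Mc := by
    by_contra hcon
    have : (0 : ℂ) ∈ spectrum ℂ Mc := spectrum.zero_mem_iff ℂ |>.2 hcon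
    exact (hsp 0 this).1 rfl
  obtain ⟨U, hU⟩ := hu
  have hev := pow_small (↑U⁻¹ : Matrix (Fin k) (Fin k) ℂ) (by
    intro z hz
    have hz2 : z⁻¹ ∈ spectrum ℂ (U : Matrix (Fin k) (Fin k) ℂ) := by
      exact (spectrum.inv₀_mem_iff (R := ℂ) (r := z) (a := U)).2 hz
    rw [hU] at hz2
    obtain ⟨h0, h1⟩ := hsp _ hz2
    rw [norm_inv] at h1
    have hz0 : 0 < ‖z‖ := norm_pos_iff.2 (fun h => h0 (by simp [h]))
    exact (one_lt_inv₀ hz0).1 h1)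
  filter_upwards [hev] with N hN u
  set uc : Fin k → ℂ := fun i => (u i : ℂ) with huc
  have e1 : (fun i => (((Aᵀ ^ N).mulVec u) i : ℂ)) = (Mc ^ N).mulVec uc := by
    have h1 : Mc ^ N = (Aᵀ ^ N).map (Int.castRingHom ℂ) := by
      rw [← RingHom.mapMatrix_apply, map_pow]; rfl
    rw [h1]
    ext i
    simp [Matrix.mulVec, dotProduct, huc]
  have e2 : uc = ((↑U⁻¹ : Matrix (Fin k) (Fin k) ℂ) ^ N).mulVec ((Mc ^ N).mulVec uc) := by
    rw [Matrix.mulVec_mulVec, ← hU, ← Units.val_pow_eq_pow_val, ← Units.val_pow_eq_pow_val,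
      ← Units.val_mul, inv_pow, inv_mul_cancel, Units.val_one, Matrix.one_mulVec]
  have e3 : ‖uc‖ ≤ ‖(↑U⁻¹ : Matrix (Fin k) (Fin k) ℂ) ^ N‖ * ‖(Mc ^ N).mulVec uc‖ := by
    conv_lhs => rw [e2]
    exact Matrix.linfty_opNorm_mulVec _ _
  rw [← e1, norm_castC, norm_castC] at e3
  have := mul_le_mul_of_nonneg_right hN (norm_nonneg ((Aᵀ ^ N).mulVec u))
  linarith

lemma mat_bound {k : ℕ} (M : Matrix (Fin k) (Fin k) ℤ) :
    ∃ C : ℝ, 1 ≤ C ∧ ∀ u : Fin k → ℤ, ‖M.mulVec u‖ ≤ C * ‖u‖ := by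
  let _ : SeminormedAddCommGroup (Matrix (Fin k) (Fin k) ℤ) := Matrix.linftyOpSeminormedAddCommGroup
  refine ⟨‖M‖ + 1, by linarith [norm_nonneg M], fun u => ?_⟩
  have := Matrix.linfty_opNorm_mulVec M u
  nlinarith [norm_nonneg u]

def wv {k p : ℕ} (x : Fin k → ZMod p) : Fin k → ℤ := fun i => (x i).valMinAbs

lemma redM_wv {k p : ℕ} (x : Fin k → ZMod p) : redM p (wv x) = x := by
  ext i; simp [redM, wv]

lemma norm_wv {k p : ℕ} [NeZero p] (x : Fin k → ZMod p) : ‖wv x‖ ≤ p / 2 := by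
  rw [pi_norm_le_iff_of_nonneg (by positivity)]
  intro i
  have := ZMod.valMinAbs_mem_Ioc (x i)
  have h1 : (-(p : ℝ)) < (x i).valMinAbs * 2 := by exact_mod_cast this.1
  have h2 : ((x i).valMinAbs : ℝ) * 2 ≤ p := by exact_mod_cast this.2
  rw [Int.norm_eq_abs, wv, abs_le]; constructor <;> linarith

lemma valMin_eq {p : ℕ} [NeZero p] (z : ℤ) (h : |(z : ℝ)| < p / 2) :
    (z : ZMod p).valMinAbs = z := by
  rw [ZMod.valMinAbs_spec]
  refine ⟨rfl, ?_⟩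
  rw [abs_lt] at h
  constructor
  · have : (-(p : ℝ)) < z * 2 := by linarith
    exact_mod_cast this
  · have : (z : ℝ) * 2 ≤ p := by linarith
    exact_mod_cast this

lemma wv_redM_eq {k p : ℕ} [NeZero p] (u : Fin k → ℤ) (h : ‖u‖ < p / 2) : wv (redM p u) = u := by
  ext i
  refine valMin_eq _ ?_
  have := norm_le_pi_norm u i
  rw [Int.norm_eq_abs] at this
  linarith

lemma norm_wv_redM {k p : ℕ} [NeZero p] (u : Fin k → ℤ) : ‖wv (redM p u)‖ ≤ ‖u‖ := by
  by_cases h : ‖u‖ < p / 2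
  · rw [wv_redM_eq u h]
  · exact (norm_wv _).trans (not_lt.1 h)

def dg {k p : ℕ} (M : Matrix (Fin k) (Fin k) ℤ) (x : Fin k → ZMod p) : Fin k → ℤ :=
  fun i => (M.mulVec (wv x) - wv ((M.map (Int.cast : ℤ → ZMod p)).mulVec x)) i / p

lemma dg_spec {k p : ℕ} [NeZero p] (M : Matrix (Fin k) (Fin k) ℤ) (x : Fin k → ZMod p) :
    M.mulVec (wv x) - wv ((M.map (Int.cast : ℤ → ZMod p)).mulVec x) = (p : ℤ) • dg M x := by
  ext i
  simp only [dg, Pi.smul_apply, smul_eq_mul]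
  rw [Int.mul_ediv_cancel']
  rw [← ZMod.intCast_zmod_eq_zero_iff_dvd _ p]
  have h := congr_fun (redM_mulVec p M (wv x)) i
  rw [redM_wv] at h
  have h2 := congr_fun (redM_wv ((M.map (Int.cast : ℤ → ZMod p)).mulVec x)) i
  simp only [redM] at h h2
  rw [Pi.sub_apply, Int.cast_sub, h, h2, sub_self]

lemma dg_norm {k p : ℕ} [NeZero p] (M : Matrix (Fin k) (Fin k) ℤ) (C : ℝ) (hC : 1 ≤ C)
    (hM : ∀ u : Fin k → ℤ, ‖M.mulVec u‖ ≤ C * ‖u‖) (x : Fin k → ZMod p) : ‖dg M x‖ ≤ C := by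
  have hp : (0 : ℝ) < p := by exact_mod_cast NeZero.pos p
  have h := congr_arg norm (dg_spec M x)
  rw [norm_smul, Int.norm_eq_abs, Int.cast_natCast, abs_of_pos hp] at h
  have h1 := norm_sub_le (M.mulVec (wv x)) (wv ((M.map (Int.cast : ℤ → ZMod p)).mulVec x))
  have h2 := hM (wv x)
  have h3 := norm_wv x
  have h4 := norm_wv ((M.map (Int.cast : ℤ → ZMod p)).mulVec x)
  have h5 : (p : ℝ) * ‖dg M x‖ ≤ p * C := by nlinarith
  exact le_of_mul_le_mul_left h5 hp

lemma dg_ne {k p : ℕ} [NeZero p] (M : Matrix (Fin k) (Fin k) ℤ) (C : ℝ) (hC : 1 ≤ C)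
    (hM : ∀ u : Fin k → ℤ, ‖M.mulVec u‖ ≤ C * ‖u‖) (x : Fin k → ZMod p) (h : dg M x ≠ 0) :
    p / (2 * C) ≤ ‖wv x‖ := by
  by_contra hcon
  push Not at hcon
  rw [lt_div_iff₀ (by linarith)] at hcon
  have h2 : ‖M.mulVec (wv x)‖ < p / 2 := by have := hM (wv x); linarith
  have h3 := wv_redM_eq _ h2
  rw [redM_mulVec, redM_wv] at h3
  apply h
  ext i
  simp [dg, h3]

lemma dg_zero {k p : ℕ} [NeZero p] (M : Matrix (Fin k) (Fin k) ℤ) :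
    dg M (0 : Fin k → ZMod p) = 0 := by
  have : wv (0 : Fin k → ZMod p) = 0 := by ext i; simp [wv]
  ext i
  simp [dg, this]

lemma dg_inj {k p : ℕ} [NeZero p] (M : Matrix (Fin k) (Fin k) ℤ)
    (hM : ∀ u : Fin k → ℤ, 2 * ‖u‖ ≤ ‖M.mulVec u‖) (t : ℕ) (ht : p < 2 ^ t)
    (x x' : Fin k → ZMod p)
    (h : ∀ j < t, dg M ((M.map (Int.cast : ℤ → ZMod p)).mulVec^[j] x) =
      dg M ((M.map (Int.cast : ℤ → ZMod p)).mulVec^[j] x')) : x = x' := by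
  set T : (Fin k → ZMod p) → (Fin k → ZMod p) := (M.map (Int.cast : ℤ → ZMod p)).mulVec with hT
  have h1 : ∀ j ≤ t, (2 : ℝ) ^ j * ‖wv x - wv x'‖ ≤ ‖wv (T^[j] x) - wv (T^[j] x')‖ := by
    intro j hj
    induction j with
    | zero => simp
    | succ j ih =>
      have ih := ih (by omega)
      have e1 := dg_spec M (T^[j] x)
      have e2 := dg_spec M (T^[j] x')
      rw [h j (by omega), ← e2] at e1
      have e3 : wv (T^[j+1] x) - wv (T^[j+1] x') = M.mulVec (wv (T^[j] x) - wv (T^[j] x')) := by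
        rw [Function.iterate_succ_apply', Function.iterate_succ_apply', Matrix.mulVec_sub]
        have e4 : M.mulVec (wv (T^[j] x)) - wv (T (T^[j] x)) =
          M.mulVec (wv (T^[j] x')) - wv (T (T^[j] x')) := e1
        rw [sub_eq_sub_iff_add_eq_add] at e4 ⊢
        rw [add_comm (wv _), ← e4, add_comm]
      rw [e3, pow_succ]
      have := hM (wv (T^[j] x) - wv (T^[j] x'))
      linarith
  have h2 := h1 t le_rfl
  have h3 := norm_sub_le (wv (T^[t] x)) (wv (T^[t] x'))
  have h4 := norm_wv (T^[t] x)
  have h5 := norm_wv (T^[t] x')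
  have ht' : (p : ℝ) < 2 ^ t := by exact_mod_cast ht
  have h6 : ‖wv x - wv x'‖ < 1 := by
    by_contra hcon
    push Not at hcon
    have : (2 : ℝ) ^ t * 1 ≤ 2 ^ t * ‖wv x - wv x'‖ := by gcongr
    linarith
  have h7 : wv x = wv x' := by
    ext i
    have := (norm_le_pi_norm (wv x - wv x') i).trans_lt h6
    rw [Int.norm_eq_abs, ← Int.cast_abs] at this
    have h8 : |(wv x - wv x') i| < 1 := by exact_mod_cast this
    have := Int.abs_lt_one_iff.1 h8
    rw [Pi.sub_apply] at this
    omega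
  rw [← redM_wv x, h7, redM_wv]

lemma map_pow_T {k : ℕ} (p : ℕ) (A : Matrix (Fin k) (Fin k) ℤ) (N : ℕ) :
    (Aᵀ ^ N).map (Int.cast : ℤ → ZMod p) = (A.map (Int.cast : ℤ → ZMod p))ᵀ ^ N := by
  have : (Aᵀ ^ N).map (Int.castRingHom (ZMod p)) = (Aᵀ.map (Int.castRingHom (ZMod p))) ^ N := by
    rw [← RingHom.mapMatrix_apply, map_pow]; rfl
  exact this

lemma block {k : ℕ} (hk : 1 ≤ k)
    (A : Matrix (Fin k) (Fin k) ℤ) (μ : (Fin k → ℤ) → ℝ) (hμ0 : ∀ x, 0 ≤ μ x) (hμ1 : HasSum μ 1)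
    (y : Fin k → (Fin k → ℤ)) (hy : ∀ j, y j ∈ VdSet A μ)
    (N : ℕ) (hN : minpolyDeg A ≤ N) (C : ℝ) (hC : 1 ≤ C)
    (hM : ∀ u : Fin k → ℤ, ‖(Aᵀ ^ N).mulVec u‖ ≤ C * ‖u‖) :
    ∃ β : ℝ, 0 < β ∧ β < 1 ∧ ∀ (p : ℕ) [NeZero p] (a : Fin k → ZMod p),
      dg (Aᵀ ^ N) (((colMat y).det : ZMod p) • a) ≠ 0 →
      ∏ j ∈ Finset.range N,
        ‖muHat p μ (((A.map (Int.cast : ℤ → ZMod p))ᵀ ^ j).mulVec a)‖ ^ 2 ≤ β := by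
  obtain ⟨C2, hC2, hB⟩ := mat_bound (colMat y)ᵀ.adjugate
  have : Nonempty (Fin k) := ⟨⟨0, hk⟩⟩
  choose x hx m hm hyx using hy
  choose h g hh hg hxhg using hx
  obtain ⟨i0, hi0⟩ := Finite.exists_min (fun i => μ (h i) * μ (g i))
  set η := μ (h i0) * μ (g i0) with hη
  have hη0 : 0 < η :=
    mul_pos (lt_of_le_of_ne (hμ0 _) (hh i0).symm) (lt_of_le_of_ne (hμ0 _) (hg i0).symm)
  set δ : ℝ := 1 / (2 * C * C2) with hδ
  have hδ0 : 0 < δ := by positivity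
  refine ⟨Real.exp (-(η * (8 * δ ^ 2))), Real.exp_pos _, ?_, ?_⟩
  · rw [Real.exp_lt_one_iff]
    have : 0 < η * (8 * δ ^ 2) := by positivity
    linarith
  intro p _ a ha
  have hp : (0 : ℝ) < p := by exact_mod_cast NeZero.pos p
  set b : Fin k → ZMod p := fun i => a ⬝ᵥ redM p (y i) with hb
  have hbB : b = ((colMat y)ᵀ.map (Int.cast : ℤ → ZMod p)).mulVec a := by
    ext i
    simp [hb, Matrix.mulVec, dotProduct, colMat, redM, mul_comm]
  have h1 := dg_ne (Aᵀ ^ N) C hC hM _ ha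
  have h2 : ((colMat y).det : ZMod p) • a = redM p ((colMat y)ᵀ.adjugate.mulVec (wv b)) := by
    rw [redM_mulVec, redM_wv, hbB, Matrix.mulVec_mulVec]
    have : (colMat y)ᵀ.adjugate.map (Int.cast : ℤ → ZMod p) *
        (colMat y)ᵀ.map (Int.cast : ℤ → ZMod p) =
        ((colMat y).det : ZMod p) • (1 : Matrix (Fin k) (Fin k) (ZMod p)) := by
      have e := congr_arg (Int.castRingHom (ZMod p)).mapMatrix (Matrix.adjugate_mul (colMat y)ᵀ)
      rw [map_mul, Matrix.det_transpose] at e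
      refine Eq.trans e ?_
      ext i j
      simp only [RingHom.mapMatrix_apply, Matrix.map_apply, Matrix.smul_apply, Matrix.one_apply,
        smul_eq_mul]
      split_ifs <;> simp
    rw [this, Matrix.smul_mulVec, Matrix.one_mulVec]
  have h3 : ‖wv (((colMat y).det : ZMod p) • a)‖ ≤ C2 * ‖wv b‖ := by
    rw [h2]
    exact (norm_wv_redM _).trans (hB _)
  have h4 : δ * p ≤ ‖wv b‖ := by
    have h5 := h1.trans h3
    rw [div_le_iff₀ (by positivity)] at h5
    rw [hδ, div_mul_eq_mul_div, div_le_iff₀ (by positivity)]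
    linarith
  obtain ⟨i, hi⟩ : ∃ i, δ * p ≤ ‖wv b i‖ := by
    by_contra hcon
    push Not at hcon
    have := (pi_norm_lt_iff (x := wv b) (by positivity : 0 < δ * p)).2 hcon
    linarith
  set a' := ((A.map (Int.cast : ℤ → ZMod p))ᵀ ^ (m i)).mulVec a with ha'
  have h6 : b i = a' ⬝ᵥ redM p (h i - g i) := by
    rw [← hxhg, hb, ha']
    simp only
    have e1 : (A ^ (m i)).map (Int.cast : ℤ → ZMod p) = (A.map (Int.cast : ℤ → ZMod p)) ^ (m i) := by
      have : (A ^ (m i)).map (Int.castRingHom (ZMod p)) = (A.map (Int.castRingHom (ZMod p))) ^ (m i) := by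
        rw [← RingHom.mapMatrix_apply, map_pow]; rfl
      exact this
    rw [hyx, redM_mulVec, e1, ← Matrix.transpose_pow, Matrix.mulVec_transpose,
      ← Matrix.dotProduct_mulVec]
  have h7 := muHat_sq μ hμ0 hμ1 a' (h i) (g i)
  rw [← h6] at h7
  have h8 : δ ^ 2 ≤ (((b i).valMinAbs : ℝ) / p) ^ 2 := by
    rw [← sq_abs ((((b i).valMinAbs : ℝ) / p))]
    refine pow_le_pow_left₀ hδ0.le ?_ 2
    rw [abs_div, abs_of_pos hp, le_div_iff₀ hp]
    rw [Int.norm_eq_abs] at hi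
    exact hi
  have h9 : η * (8 * δ ^ 2) ≤ μ (h i) * μ (g i) * (8 * (((b i).valMinAbs : ℝ) / p) ^ 2) := by
    refine mul_le_mul (hi0 i) (by linarith) (by positivity) (mul_nonneg (hμ0 _) (hμ0 _))
  have h10 : ‖muHat p μ a'‖ ^ 2 ≤ Real.exp (-(η * (8 * δ ^ 2))) := by
    have := Real.one_sub_le_exp_neg (η * (8 * δ ^ 2))
    linarith
  rw [← Finset.mul_prod_erase _ _ (Finset.mem_range.2 ((hm i).trans_le hN))]
  refine le_trans (mul_le_of_le_one_right (by positivity) ?_) h10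
  exact Finset.prod_le_one (fun _ _ => by positivity)
    (fun j _ => muHat_sq_le_one μ hμ0 hμ1 _)

lemma prod_blocks (F : ℕ → ℝ) (N q : ℕ) :
    ∏ j ∈ Finset.range (q * N), F j = ∏ b ∈ Finset.range q, ∏ j ∈ Finset.range N, F (b * N + j) := by
  induction q with
  | zero => simp
  | succ q ih => rw [Nat.succ_mul, Finset.prod_range_add, ih, Finset.prod_range_succ]

lemma unit_of_gcd {p : ℕ} (d : ℤ) (h : Int.gcd d p = 1) : IsUnit (d : ZMod p) := by
  have h1 : IsCoprime d (p : ℤ) := Int.isCoprime_iff_gcd_eq_one.2 h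
  have := h1.map (Int.castRingHom (ZMod p))
  simpa [isCoprime_zero_right] using this

lemma main_bound {k : ℕ} (hk : 1 ≤ k)
    (A : Matrix (Fin k) (Fin k) ℤ)
    (hEig : ∀ lam : ℂ, (A.map (Int.cast : ℤ → ℂ)).charpoly.IsRoot lam →
      lam ≠ 0 ∧ ∃ l : ℕ, 0 < l ∧ ∃ m : ℕ, 2 ≤ m ∧ lam ^ l = (m : ℂ))
    (μ : (Fin k → ℤ) → ℝ) (hμ0 : ∀ x, 0 ≤ μ x) (hμ1 : HasSum μ 1)
    (y : Fin k → (Fin k → ℤ)) (hy : ∀ j, y j ∈ VdSet A μ) :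
    ∃ (N K : ℕ) (β : ℝ), 0 < β ∧ β < 1 ∧ ∀ p : ℕ, 0 < p →
      Int.gcd A.det p = 1 → Int.gcd (colMat y).det p = 1 →
      ∀ n t r : ℕ, 0 < r → p < 2 ^ t → r * t * N ≤ n →
        (tvDist A μ p n) ^ 2 ≤ (1 + K * β ^ r) ^ t - 1 := by
  obtain ⟨N, hexp, hN⟩ := ((expand hk A hEig).and
    (Filter.eventually_ge_atTop (minpolyDeg A))).exists
  obtain ⟨C, hC, hM⟩ := mat_bound (Aᵀ ^ N)
  obtain ⟨β, hβ0, hβ1, hβ⟩ := block hk A μ hμ0 hμ1 y hy N hN C hC hM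
  set Sf : Finset (Fin k → ℤ) := Fintype.piFinset fun _ => Finset.Icc (-⌈C⌉) ⌈C⌉ with hSf
  refine ⟨N, Sf.card, β, hβ0, hβ1, ?_⟩
  intro p hp hgA hgB n t r hr ht hn
  have : NeZero p := ⟨hp.ne'⟩
  have huD := unit_of_gcd _ hgB
  have huA := unit_of_gcd _ hgA
  set D : ZMod p := ((colMat y).det : ZMod p) with hD
  set AT := (A.map (Int.cast : ℤ → ZMod p))ᵀ with hAT
  have hATu : IsUnit AT := by
    rw [Matrix.isUnit_iff_isUnit_det, hAT, Matrix.det_transpose]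
    have : (A.map (Int.cast : ℤ → ZMod p)).det = (A.det : ZMod p) :=
      (RingHom.map_det (Int.castRingHom (ZMod p)) A).symm
    rw [this]; exact huA
  have hTu : IsUnit (AT ^ N) := hATu.pow N
  have hbij : Function.Bijective (AT ^ N).mulVec := by
    obtain ⟨U, hU⟩ := hTu
    rw [← hU]
    refine Function.bijective_iff_has_inverse.2 ⟨(↑U⁻¹ : Matrix (Fin k) (Fin k) (ZMod p)).mulVec,
      fun x => ?_, fun x => ?_⟩
    · rw [Matrix.mulVec_mulVec, Units.inv_mul, Matrix.one_mulVec]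
    · rw [Matrix.mulVec_mulVec, Units.mul_inv, Matrix.one_mulVec]
  set T : (Fin k → ZMod p) ≃ (Fin k → ZMod p) := Equiv.ofBijective _ hbij with hT
  have hTa : (T : (Fin k → ZMod p) → (Fin k → ZMod p)) = (AT ^ N).mulVec := rfl
  have hTit : ∀ b x, T^[b] x = (AT ^ (b * N)).mulVec x := by
    intro b x
    induction b with
    | zero => simp
    | succ b ih =>
      rw [Function.iterate_succ_apply', ih, hTa, Matrix.mulVec_mulVec, ← pow_add, Nat.succ_mul,
        add_comm]
  set f : (Fin k → ZMod p) → ℝ := fun a =>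
    ∏ j ∈ Finset.range N, ‖muHat p μ ((AT ^ j).mulVec a)‖ ^ 2 with hf
  have hMmap : (Aᵀ ^ N).map (Int.cast : ℤ → ZMod p) = AT ^ N := map_pow_T p A N
  have hc := core (0 : Fin k → ZMod p) Sf 0 (by
      have : (0 : ℝ) ≤ C := by linarith
      simp [hSf, Fintype.mem_piFinset, Int.ceil_nonneg this]) T (by simp [hTa]) f
    (fun x => Finset.prod_nonneg fun _ _ => by positivity)
    (fun x => Finset.prod_le_one (fun _ _ => by positivity)
      (fun j _ => muHat_sq_le_one μ hμ0 hμ1 _))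
    (fun a => dg (Aᵀ ^ N) (D • a)) (fun a => by
      have h1 := dg_norm (Aᵀ ^ N) C hC hM (D • a)
      rw [hSf, Fintype.mem_piFinset]
      intro i
      have h2 := (norm_le_pi_norm _ i).trans h1
      rw [Int.norm_eq_abs, abs_le] at h2
      have h3 := Int.le_ceil C
      rw [Finset.mem_Icc]
      constructor
      · have : ((-⌈C⌉ : ℤ) : ℝ) ≤ (dg (Aᵀ ^ N) (D • a) i : ℝ) := by push_cast; linarith
        exact_mod_cast this
      · have : (dg (Aᵀ ^ N) (D • a) i : ℝ) ≤ ((⌈C⌉ : ℤ) : ℝ) := by linarith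
        exact_mod_cast this) (by simp [dg_zero]) β hβ0.le (fun a ha => hβ p a ha) t r hr (by
      intro x x' h
      have h1 := dg_inj (Aᵀ ^ N) hexp t ht (D • x) (D • x') (by
        intro j hj
        have h2 := h j hj
        have h3 : ∀ x, (AT ^ N).mulVec^[j] (D • x) = D • T^[j] x := by
          intro x
          rw [← hTa, hTit, hTit, Matrix.mulVec_smul]
        rw [hMmap, h3, h3]
        exact h2)
      exact huD.smul_left_cancel.1 h1)
  refine (upper_bound A μ hμ0 hμ1 n).trans (le_trans (Finset.sum_le_sum fun a _ => ?_) hc)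
  rw [muHat_chain A μ hμ0 hμ1, norm_prod, ← Finset.prod_pow]
  obtain ⟨e, rfl⟩ := Nat.exists_eq_add_of_le hn
  rw [Finset.prod_range_add, prod_blocks]
  refine (mul_le_of_le_one_right (by positivity) (Finset.prod_le_one (fun _ _ => by positivity)
      (fun j _ => muHat_sq_le_one μ hμ0 hμ1 _))).trans (le_of_eq ?_)
  refine Finset.prod_congr rfl fun b _ => Finset.prod_congr rfl fun j _ => ?_
  rw [hTit, Matrix.mulVec_mulVec, ← pow_add, add_comm]

/-- **Theorem 3.4**: if every (complex) eigenvalue `λ` of `A` is nonzero and satisfies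
`λ^l ∈ ℕ, λ^l ≥ 2` for some positive integer `l`, and the support of `μ` is not parallel
to a proper subspace of `ℚ^k` invariant under `A`, then there is `c > 0` such that for all
`p` with `gcd(det A, p) = gcd(det B, p) = 1` and all `n ≥ c ln p ln ln p`,
`‖P_n − U‖ ≤ ε(p)` where `ε(p) → 0` as `p → ∞`. -/
theorem uniformity_ln_lnln (k : ℕ) (hk : 1 ≤ k)
    (A : Matrix (Fin k) (Fin k) ℤ) (hA : A.det ≠ 0)
    (hEig : ∀ lam : ℂ, (A.map (Int.cast : ℤ → ℂ)).charpoly.IsRoot lam →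
      lam ≠ 0 ∧ ∃ l : ℕ, 0 < l ∧ ∃ m : ℕ, 2 ≤ m ∧ lam ^ l = (m : ℂ))
    (μ : (Fin k → ℤ) → ℝ) (hμ0 : ∀ x, 0 ≤ μ x) (hμ1 : HasSum μ 1)
    (hpar : ¬ ParallelInv A μ)
    (y : Fin k → (Fin k → ℤ)) (hy : ∀ j, y j ∈ VdSet A μ)
    (hybasis : (colMat y).det ≠ 0) :
    ∃ (c : ℝ) (ε : ℕ → ℝ), 0 < c ∧ Filter.Tendsto ε Filter.atTop (nhds 0) ∧
      ∀ p : ℕ, 0 < p → Int.gcd A.det p = 1 → Int.gcd (colMat y).det p = 1 →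
        ∀ n : ℕ, c * Real.log p * Real.log (Real.log p) ≤ n → tvDist A μ p n ≤ ε p := by
  obtain ⟨N, K, β, hβ0, hβ1, hmain⟩ := main_bound hk A hEig μ hμ0 hμ1 y hy
  obtain ⟨s, hs⟩ := exists_pow_lt_of_lt_one (by norm_num : (0 : ℝ) < 1 / 4) hβ1
  have hs0 : 0 < s := by
    rcases Nat.eq_zero_or_pos s with h | h
    · subst h; norm_num at hs
    · exact h
  refine ⟨18 * N * s + 1, fun p => if 1 ≤ Real.log (Real.log p) then
    Real.sqrt (Real.exp (K / ((Nat.log 2 p + 1 : ℕ) : ℝ)) - 1) else 1, by positivity, ?_, ?_⟩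
  · have hlog : Filter.Tendsto (fun p : ℕ => Real.log (Real.log p)) Filter.atTop Filter.atTop :=
      Real.tendsto_log_atTop.comp (Real.tendsto_log_atTop.comp tendsto_natCast_atTop_atTop)
    have hnl : Filter.Tendsto (fun p : ℕ => Nat.log 2 p + 1) Filter.atTop Filter.atTop := by
      refine Filter.tendsto_atTop.2 fun b => ?_
      filter_upwards [Filter.eventually_ge_atTop (2 ^ b)] with p hp
      have := Nat.le_log_of_pow_le (by norm_num) hp
      omega
    have h1 : Filter.Tendsto (fun p : ℕ =>
        Real.sqrt (Real.exp (K / ((Nat.log 2 p + 1 : ℕ) : ℝ)) - 1)) Filter.atTop (nhds 0) := by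
      have h2 : Filter.Tendsto (fun p : ℕ => (K : ℝ) / ((Nat.log 2 p + 1 : ℕ) : ℝ))
          Filter.atTop (nhds 0) := (tendsto_const_div_atTop_nhds_zero_nat (K : ℝ)).comp hnl
      have h3 := (((Real.continuous_exp.tendsto 0).comp h2).sub_const 1).sqrt
      simpa using h3
    refine h1.congr' ?_
    filter_upwards [hlog.eventually_ge_atTop 1] with p hp
    rw [if_pos hp]
  · intro p hp hgA hgB n hn
    have : NeZero p := ⟨hp.ne'⟩
    simp only
    split_ifs with hL
    swap
    · exact tv_le_one A μ hμ0 hμ1 n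
    refine Real.le_sqrt_of_sq_le ?_
    set t := Nat.log 2 p + 1 with ht
    set q := Nat.log 2 t + 1 with hq
    have ht0 : 0 < t := by omega
    have htR : (0 : ℝ) < t := by exact_mod_cast ht0
    have hpt : p < 2 ^ t := Nat.lt_pow_succ_log_self (by norm_num) p
    have htq : t < 2 ^ q := Nat.lt_pow_succ_log_self (by norm_num) t
    have hp1 : (1 : ℝ) ≤ p := by exact_mod_cast hp
    have hl0 : 0 ≤ Real.log p := Real.log_nonneg hp1
    have hl1 : 1 ≤ Real.log p := by
      by_contra hcon
      push Not at hcon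
      have := Real.log_nonpos hl0 hcon.le
      linarith
    have hlog2 : 0.69 < Real.log 2 := by have := Real.log_two_gt_d9; linarith
    have hlogn : ∀ m : ℕ, 0 < m → (Nat.log 2 m : ℝ) * 0.69 ≤ Real.log m := by
      intro m hm
      have h1 : ((2 : ℝ) ^ Nat.log 2 m) ≤ m := by exact_mod_cast Nat.pow_log_le_self 2 hm.ne'
      have h2 := Real.log_le_log (by positivity) h1
      rw [Real.log_pow] at h2
      have : (Nat.log 2 m : ℝ) * 0.69 ≤ (Nat.log 2 m : ℝ) * Real.log 2 := by gcongr
      linarith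
    have htl : (t : ℝ) ≤ 3 * Real.log p := by
      have := hlogn p hp
      rw [ht]; push_cast; linarith
    have hql : (q : ℝ) ≤ 6 * Real.log (Real.log p) := by
      have h1 := hlogn t ht0
      have h2 := Real.log_le_log htR htl
      rw [Real.log_mul (by norm_num) (by linarith)] at h2
      have h3 := Real.log_le_sub_one_of_pos (by norm_num : (0 : ℝ) < 3)
      rw [hq]; push_cast; linarith
    have hle : s * q * t * N ≤ n := by
      have h1 : (q : ℝ) * t ≤ (6 * Real.log (Real.log p)) * (3 * Real.log p) := by gcongr
      have h2 : ((s * q * t * N : ℕ) : ℝ) ≤ n := by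
        push_cast
        refine le_trans ?_ hn
        have h3 : (s : ℝ) * N * (q * t) ≤
          s * N * ((6 * Real.log (Real.log p)) * (3 * Real.log p)) := by gcongr
        have h4 : 0 ≤ Real.log p * Real.log (Real.log p) := mul_nonneg hl0 (by linarith)
        nlinarith
      exact_mod_cast h2
    refine (hmain p hp hgA hgB n t (s * q) (Nat.mul_pos hs0 (by omega)) hpt hle).trans ?_
    have hβr : β ^ (s * q) ≤ 1 / (t : ℝ) ^ 2 := by
      rw [pow_mul]
      calc (β ^ s) ^ q ≤ (1 / 4) ^ q := by gcongr
        _ = 1 / ((2 : ℝ) ^ q) ^ 2 := by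
          rw [← pow_mul, mul_comm q 2, pow_mul, _root_.one_div_pow]; norm_num
        _ ≤ _ := by
          have : (t : ℝ) ≤ 2 ^ q := by exact_mod_cast htq.le
          gcongr
    have h1 : (1 + (K : ℝ) * β ^ (s * q)) ≤ Real.exp (K / (t : ℝ) ^ 2) := by
      have h2 := Real.add_one_le_exp ((K : ℝ) / (t : ℝ) ^ 2)
      have h3 : (K : ℝ) * β ^ (s * q) ≤ K * (1 / (t : ℝ) ^ 2) := by gcongr
      rw [mul_one_div] at h3
      linarith
    have h2 : (1 + (K : ℝ) * β ^ (s * q)) ^ t ≤ (Real.exp (K / (t : ℝ) ^ 2)) ^ t := by gcongr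
    rw [← Real.exp_nat_mul] at h2
    have h3 : (t : ℝ) * (K / (t : ℝ) ^ 2) = K / t := by field_simp
    rw [h3] at h2
    linarith
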